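/- arXiv:1306.5468 — 6 statements merged into one kernel-verified Lean document; each statement's English description precedes it below -/
import Mathlib

section
/- Let G be a group acting on a nonempty compact metric space X in such a way that for every g ∈ G the map x ↦ g • x is continuous, and assume that for any two nonempty open subsets U and V of X there exists some g ∈ G such that (g • U) ∩ V ≠ ∅. Then for every real number ω > 0 there exists a point x ∈ X whose orbit is ω-dense in X, i.e., for every y ∈ X there exists g ∈ G with dist(g • x, y) < ω. -/
/-! Cover `X` by finitely many balls of radius `ω / 2`. Transitivity allows a nonempty open set to
be shrunk, one ball at a time, to a nonempty open set all of whose points have orbits meeting every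
ball of the cover; by the triangle inequality such orbits are `ω`-dense. -/

open scoped Pointwise

/-- If a group acts by continuous maps on a nonempty compact metric space and any
two nonempty open sets meet after moving one by some group element, then for every
ω > 0 there is a point whose orbit is ω-dense. -/
theorem stmt_1 {G X : Type*} [Group G] [MetricSpace X] [CompactSpace X] [Nonempty X]
    [MulAction G X] (hc : ∀ g : G, Continuous fun x : X => g • x)
    (htrans : ∀ U V : Set X, IsOpen U → U.Nonempty → IsOpen V → V.Nonempty →
      ∃ g : G, ((g • U) ∩ V).Nonempty) :
    ∀ ω : ℝ, 0 < ω → ∃ x : X, ∀ y : X, ∃ g : G, dist (g • x) y < ω := by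
  intro ω hω
  obtain ⟨t, -, htfin, hcover⟩ :=
    finite_cover_balls_of_compact (isCompact_univ (X := X)) (half_pos hω)
  have key : ∃ U : Set X, IsOpen U ∧ U.Nonempty ∧
      ∀ x ∈ U, ∀ c ∈ t, ∃ g : G, dist (g • x) c < ω / 2 := by
    clear hcover
    induction t, htfin using Set.Finite.induction_on with
    | empty => exact ⟨Set.univ, isOpen_univ, Set.univ_nonempty, by simp⟩
    | @insert c s _ _ ih =>
      obtain ⟨U, hU, hne, h⟩ := ih
      obtain ⟨g, _, ⟨u, hu, rfl⟩, hgu⟩ := htrans U (Metric.ball c (ω / 2)) hU hne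
        Metric.isOpen_ball ⟨c, Metric.mem_ball_self (half_pos hω)⟩
      refine ⟨U ∩ (fun x => g • x) ⁻¹' Metric.ball c (ω / 2),
        hU.inter (Metric.isOpen_ball.preimage (hc g)), ⟨u, hu, hgu⟩, ?_⟩
      rintro x ⟨hxU, hxg⟩ d (rfl | hd)
      · exact ⟨g, hxg⟩
      · exact h x hxU d hd
  obtain ⟨U, -, ⟨x, hx⟩, h⟩ := key
  refine ⟨x, fun y => ?_⟩
  obtain ⟨c, hct, hyc⟩ := Set.mem_iUnion₂.1 (hcover (Set.mem_univ y))
  obtain ⟨g, hg⟩ := h x hx c hct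
  refine ⟨g, ?_⟩
  have hyc' : dist y c < ω / 2 := hyc
  linarith [dist_triangle_right (g • x) y c]
end

section
/- Let X be a compact Hausdorff topological space and let G be a group acting on X such that for each g ∈ G the map x ↦ g • x is continuous. Suppose the action is minimal, i.e., every orbit O(x) = {g • x : g ∈ G} is dense in X. Then every ideal I of the ring C(X, ℂ) of continuous complex-valued functions on X that is invariant under the induced action (i.e., for all g ∈ G and f ∈ I, the function x ↦ f(g⁻¹ • x) belongs to I) is either the zero ideal or all of C(X, ℂ). -/
/-- If a group acts minimally by continuous maps on a compact Hausdorff space X,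
then every ideal of C(X, ℂ) invariant under the induced action is ⊥ or ⊤. -/
theorem stmt_3 {G X : Type*} [Group G] [TopologicalSpace X] [CompactSpace X] [T2Space X]
    [MulAction G X] (hc : ∀ g : G, Continuous fun x : X => g • x)
    (hmin : ∀ x : X, Dense (MulAction.orbit G x)) :
    ∀ I : Ideal C(X, ℂ),
      (∀ (g : G) (f : C(X, ℂ)), f ∈ I →
        (f.comp ⟨fun x : X => g⁻¹ • x, hc g⁻¹⟩) ∈ I) →
      I = ⊥ ∨ I = ⊤ := by
  intro I hI
  refine or_iff_not_imp_right.mpr fun hne => ?_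
  -- A proper ideal lies in a maximal one, which consists of the functions vanishing at a point `x`;
  -- by invariance every `f ∈ I` then vanishes on the dense orbit of `x`.
  obtain ⟨M, hM, hIM⟩ := Ideal.exists_le_maximal I hne
  obtain ⟨x, hx⟩ := ContinuousMap.setOfIdeal_eq_compl_singleton M
  have hvan : ∀ f ∈ I, f x = 0 := fun f hf =>
    ContinuousMap.notMem_setOfIdeal.mp (by simp [hx]) (hIM hf)
  refine (Submodule.eq_bot_iff I).mpr fun f hf => DFunLike.coe_injective ?_
  refine Continuous.ext_on (hmin x) f.continuous continuous_zero ?_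
  rintro _ ⟨g, rfl⟩
  simpa using hvan _ (hI g⁻¹ f hf)
end

section
/- Let X be a compact Hausdorff topological space and let G be a group acting on X such that for each g ∈ G the map x ↦ g • x is continuous. Suppose that the only ideals I of the ring C(X, ℂ) of continuous complex-valued functions on X that are invariant under the induced action (i.e., for all g ∈ G and f ∈ I, the function x ↦ f(g⁻¹ • x) belongs to I) are the zero ideal and C(X, ℂ) itself. Then the action is minimal, i.e., every orbit O(x) = {g • x : g ∈ G} is dense in X. -/
/-!
The functions vanishing on the orbit of `x` form an invariant ideal. It is proper, since the
constant function `1` does not vanish at `x`, so by hypothesis it is zero. By Urysohn's lemma, in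
the form `ContinuousMap.setOfIdeal_ofSet_eq_interior`, the points where some function of this ideal
is nonzero form the interior of the complement of the orbit; this interior is therefore empty, which
says that the orbit is dense.
-/

/-- If a group acts by continuous maps on a compact Hausdorff space X and the only
ideals of C(X, ℂ) invariant under the induced action are ⊥ and ⊤, then the action
is minimal: every orbit is dense. -/
theorem stmt_4 {G X : Type*} [Group G] [TopologicalSpace X] [CompactSpace X] [T2Space X]
    [MulAction G X] (hc : ∀ g : G, Continuous fun x : X => g • x)
    (hsimple : ∀ I : Ideal C(X, ℂ),
      (∀ (g : G) (f : C(X, ℂ)), f ∈ I →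
        (f.comp ⟨fun x : X => g⁻¹ • x, hc g⁻¹⟩) ∈ I) →
      I = ⊥ ∨ I = ⊤) :
    ∀ x : X, Dense (MulAction.orbit G x) := by
  intro x
  -- `idealOfSet s` consists of the functions vanishing off `s`, hence the complement.
  let I : Ideal C(X, ℂ) := ContinuousMap.idealOfSet ℂ (MulAction.orbit G x)ᶜ
  have mem_I : ∀ f : C(X, ℂ), f ∈ I ↔ ∀ y ∈ MulAction.orbit G x, f y = 0 := by
    intro f
    simp only [I, ContinuousMap.mem_idealOfSet, compl_compl]
  have hinv : ∀ (g : G) (f : C(X, ℂ)), f ∈ I →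
      (f.comp ⟨fun x : X => g⁻¹ • x, hc g⁻¹⟩) ∈ I := by
    intro g f hf
    rw [mem_I] at hf ⊢
    intro y hy
    exact hf (g⁻¹ • y) (MulAction.mem_orbit_of_mem_orbit g⁻¹ hy)
  rcases hsimple I hinv with h | h
  · rw [← compl_compl (MulAction.orbit G x), ← interior_eq_empty_iff_dense_compl,
      ← ContinuousMap.setOfIdeal_ofSet_eq_interior (𝕜 := ℂ)]
    change ContinuousMap.setOfIdeal I = ∅
    rw [h]
    ext y
    simp [ContinuousMap.mem_setOfIdeal]
  · have h1 : (1 : C(X, ℂ)) ∈ I := h ▸ Submodule.mem_top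
    exact absurd ((mem_I 1).1 h1 x (MulAction.mem_orbit_self x)) (by simp)
end

section
/- Let X be an infinite Hausdorff topological space and let G be a group acting on X such that for each g ∈ G the map x ↦ g • x is continuous. Assume that every periodic point of X has finite orbit, i.e., whenever x ∈ X satisfies g • x = x for some g ∈ G with g ≠ 1, the orbit O(x) = {h • x : h ∈ G} is a finite set. If the action is minimal (every orbit is dense in X), then the action is topologically free: for every g ∈ G with g ≠ 1, the fixed-point set {x ∈ X : g • x = x} has empty interior. -/
/-- Let a group act by continuous maps on an infinite Hausdorff space in which every
periodic point has finite orbit. If the action is minimal then it is topologically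
free: every nontrivial group element has fixed-point set with empty interior. -/
theorem stmt_5 {G X : Type*} [Group G] [TopologicalSpace X] [T2Space X] [Infinite X]
    [MulAction G X] (hc : ∀ g : G, Continuous fun x : X => g • x)
    (hper : ∀ x : X, (∃ g : G, g ≠ 1 ∧ g • x = x) → (MulAction.orbit G x).Finite)
    (hmin : ∀ x : X, Dense (MulAction.orbit G x)) :
    ∀ g : G, g ≠ 1 → interior {x : X | g • x = x} = ∅ := by
  intro g hg
  rw [Set.eq_empty_iff_forall_notMem]
  intro x hx
  have hgx : x ∈ {x : X | g • x = x} := interior_subset hx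
  have hfin := hper x ⟨g, hg, hgx⟩
  -- A finite orbit is closed, since `X` is Hausdorff; being dense, it is all of `X`.
  have huniv : MulAction.orbit G x = Set.univ := by
    rw [← hfin.isClosed.closure_eq, (hmin x).closure_eq]
  exact Set.infinite_univ (huniv ▸ hfin)
end

section
/- Let X be a compact Hausdorff topological space and let g : X → X be a homeomorphism. Then the following are equivalent: (i) the only function a ∈ C(X, ℂ) satisfying a(x)·(f(x) − f(g⁻¹(x))) = 0 for all f ∈ C(X, ℂ) and all x ∈ X is a = 0; (ii) the fixed-point set {x ∈ X : g(x) = x} has empty interior. -/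
/-!
By Urysohn's lemma, continuous functions separate `x` from `g⁻¹ x` whenever `g x ≠ x`, so the
condition on `a` says exactly that `a` vanishes off the fixed-point set, i.e. that the open
support `{x | a x ≠ 0}` lies in the interior of that set. If the interior is empty, then `a = 0`;
if it is not, Urysohn's lemma gives a nonzero `a` supported inside it.
-/

/-- Urysohn's lemma for a closed set and a point outside it, with complex values. -/
lemma exists_complex_urysohn {X : Type*} [TopologicalSpace X] [CompactSpace X] [T2Space X]
    {s : Set X} (hs : IsClosed s) {x : X} (hx : x ∉ s) :
    ∃ f : C(X, ℂ), (∀ y ∈ s, f y = 0) ∧ f x = 1 := by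
  obtain ⟨f, hf0, hf1, -⟩ := exists_continuous_zero_one_of_isClosed hs
    (isClosed_singleton (x := x)) (Set.disjoint_singleton_right.2 hx)
  refine ⟨⟨fun y => (f y : ℂ), by fun_prop⟩, fun y hy => ?_, ?_⟩
  · simpa using hf0 hy
  · simpa using hf1 (Set.mem_singleton x)

/-- For a homeomorphism g of a compact Hausdorff space X, the only continuous a with
a(x)·(f(x) − f(g⁻¹(x))) = 0 for all continuous f and all x is a = 0, if and only if
the fixed-point set of g has empty interior. -/
theorem stmt_9 {X : Type*} [TopologicalSpace X] [CompactSpace X] [T2Space X]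
    (g : X ≃ₜ X) :
    (∀ a : C(X, ℂ),
        (∀ (f : C(X, ℂ)) (x : X), a x * (f x - f (g.symm x)) = 0) → a = 0) ↔
      interior {x : X | g x = x} = ∅ := by
  constructor
  · intro h
    by_contra hne
    obtain ⟨x, hx⟩ := Set.nonempty_iff_ne_empty.2 hne
    obtain ⟨a, ha0, ha1⟩ := exists_complex_urysohn (isOpen_interior.isClosed_compl)
      (Set.notMem_compl_iff.2 hx)
    have ha : a = 0 := by
      refine h a fun f y => ?_
      by_cases hy : y ∈ interior {x : X | g x = x}
      · have hgy : g y = y := (interior_subset hy : y ∈ {x : X | g x = x})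
        have hgy' : g.symm y = y := by rw [Homeomorph.symm_apply_eq, hgy]
        simp [hgy']
      · simp [ha0 y hy]
    simp [ha] at ha1
  · intro h a ha
    have hsub : {x | a x ≠ 0} ⊆ {x : X | g x = x} := by
      intro x hx
      by_contra hgx
      have hne : x ∉ ({g.symm x} : Set X) := fun hmem =>
        hgx ((Homeomorph.symm_apply_eq g).1 (Set.mem_singleton_iff.1 hmem).symm).symm
      obtain ⟨f, hf0, hf1⟩ := exists_complex_urysohn isClosed_singleton hne
      have hfx := ha f x
      rw [hf0 _ (Set.mem_singleton _), hf1, sub_zero, mul_one] at hfx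
      exact hx hfx
    have hopen : IsOpen {x | a x ≠ 0} := isOpen_ne_fun a.continuous continuous_const
    ext x
    by_contra hx
    have hmem : x ∈ interior {x : X | g x = x} := interior_maximal hsub hopen hx
    simp [h] at hmem
end

section
/- Let X be an infinite compact Hausdorff topological space and let G be a group acting on X such that for each g ∈ G the map x ↦ g • x is continuous. Assume that every periodic point of X has finite orbit, i.e., whenever x ∈ X satisfies g • x = x for some g ∈ G with g ≠ 1, the orbit O(x) = {h • x : h ∈ G} is finite. Then the following are equivalent: (i) the action is minimal, i.e., every orbit is dense in X; (ii) the only ideals I of C(X, ℂ) invariant under the induced action (for all g ∈ G and f ∈ I, the function x ↦ f(g⁻¹ • x) belongs to I) are the zero ideal and C(X, ℂ), and moreover for every g ∈ G with g ≠ 1 the fixed-point set {x ∈ X : g • x = x} has empty interior. -/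
/-!
Proper ideals of `C(X, ℂ)` have a common zero, since a maximal ideal is closed and hence consists of
the functions vanishing at some point. The zero set of an invariant ideal is invariant, so under
minimality a proper invariant ideal vanishes on a dense orbit and is zero; conversely the
functions vanishing on an orbit form an invariant proper ideal, which is nonzero (Urysohn) unless the
orbit is dense. Under minimality there are no periodic points at all: a periodic orbit would be finite
and dense, hence all of the infinite Hausdorff space `X`.
-/

/-- This holds for arbitrary proper ideals, closed or not. -/
theorem exists_common_zero {X : Type*} [TopologicalSpace X] [CompactSpace X] [T2Space X]
    (I : Ideal C(X, ℂ)) (hI : I ≠ ⊤) : ∃ x : X, ∀ f ∈ I, f x = 0 := by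
  obtain ⟨M, hM, hIM⟩ := I.exists_le_maximal hI
  obtain ⟨x, hx⟩ := (ContinuousMap.ideal_isMaximal_iff (𝕜 := ℂ) M).1 hM
  refine ⟨x, fun f hf => ?_⟩
  have h := hIM hf
  rw [← hx, ContinuousMap.mem_idealOfSet] at h
  exact h (by simp)

/-- Let a group act by continuous maps on an infinite compact Hausdorff space in
which every periodic point has finite orbit. Then the action is minimal if and only
if C(X, ℂ) has no nontrivial invariant ideals and every nontrivial group element has
fixed-point set with empty interior. -/
theorem stmt_10 {G X : Type*} [Group G] [TopologicalSpace X] [CompactSpace X]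
    [T2Space X] [Infinite X] [MulAction G X]
    (hc : ∀ g : G, Continuous fun x : X => g • x)
    (hper : ∀ x : X, (∃ g : G, g ≠ 1 ∧ g • x = x) → (MulAction.orbit G x).Finite) :
    (∀ x : X, Dense (MulAction.orbit G x)) ↔
      ((∀ I : Ideal C(X, ℂ),
          (∀ (g : G) (f : C(X, ℂ)), f ∈ I →
            (f.comp ⟨fun x : X => g⁻¹ • x, hc g⁻¹⟩) ∈ I) →
          I = ⊥ ∨ I = ⊤) ∧
        ∀ g : G, g ≠ 1 → interior {x : X | g • x = x} = ∅) := by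
  constructor
  · intro hmin
    refine ⟨fun I hI => ?_, fun g hg => ?_⟩
    · by_cases htop : I = ⊤
      · exact Or.inr htop
      · left
        obtain ⟨x, hx⟩ := exists_common_zero I htop
        rw [eq_bot_iff]
        intro f hf
        rw [Ideal.mem_bot]
        apply DFunLike.coe_injective
        refine Continuous.ext_on (hmin x) f.continuous continuous_const ?_
        rintro _ ⟨g, rfl⟩
        simpa using hx _ (hI g⁻¹ f hf)
    · have hempty : {x : X | g • x = x} = ∅ := by
        rw [Set.eq_empty_iff_forall_notMem]
        intro x hx
        have hfin := hper x ⟨g, hg, hx⟩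
        have huniv := (hmin x).closure_eq
        rw [hfin.isClosed.closure_eq] at huniv
        exact Set.infinite_univ (huniv ▸ hfin)
      rw [hempty, interior_empty]
  · rintro ⟨hid, -⟩ x
    have hinv := hid (ContinuousMap.idealOfSet ℂ (MulAction.orbit G x)ᶜ) ?_
    rcases hinv with h | h
    · have h1 := ContinuousMap.setOfIdeal_ofSet_eq_interior ℂ (MulAction.orbit G x)ᶜ
      have h2 : ContinuousMap.setOfIdeal (⊥ : Ideal C(X, ℂ)) = ∅ := by
        ext y
        simp [ContinuousMap.mem_setOfIdeal]
      rw [h, h2, interior_compl] at h1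
      rw [dense_iff_closure_eq]
      exact Set.compl_empty_iff.1 h1.symm
    · exfalso
      have h1 : (1 : C(X, ℂ)) ∈ ContinuousMap.idealOfSet ℂ (MulAction.orbit G x)ᶜ := by
        rw [h]; trivial
      rw [ContinuousMap.mem_idealOfSet] at h1
      have := @h1 x (by simp)
      simp at this
    · intro g f hf
      rw [ContinuousMap.mem_idealOfSet] at hf ⊢
      intro y hy
      rw [compl_compl] at hf hy
      exact hf (MulAction.mem_orbit_of_mem_orbit g⁻¹ hy)
end
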